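/- arXiv:1608.02223 — 2 statements merged into one kernel-verified Lean document; each statement's English description precedes it below -/
import Mathlib

section
/- Let k be an algebraically closed field and let Z = {((z_0 : z_0' : z_2 : z_2'), (y : y')) ∈ P^3 × P^1 : z_0 z_0' + z_2 z_2' = 0 and z_2 y' + z_2' y = 0}. Then Z is a smooth irreducible projective variety of dimension 2. -/
open MvPolynomial

/-!
The ideal `J` of the cone is the kernel of the monomial parametrization
`(a, b, c, d) ↦ (a²c, b²d, abc, -abd, c, d)`: both equations vanish on its image, and dividing by
them for the lexicographic order (leading terms `z₀z₀'` and `z₂y'`) leaves a combination of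
monomials divisible by neither leading term, which the parametrization sends, up to sign, to
pairwise distinct monomials. Hence `J` is prime. Every strict inclusion in the flag of primes
`0 < P < J < (z₀, z₂, z₂')`, where `P` is the kernel of a parametrization of `z₂y' + z₂'y = 0`,
lowers the dimension of the quotient; since these dimensions start at `6` and end at `3`, that of
the cone is `4`. The Jacobian matrix has rank two wherever neither `(z₀, z₀', z₂, z₂')` nor
`(y, y')` vanishes.
-/

section General

variable {σ R : Type*} [CommRing R]

theorem single_add_single_le_iff {i j : σ} (hij : i ≠ j) (m : σ →₀ ℕ) :
    Finsupp.single i 1 + Finsupp.single j 1 ≤ m ↔ m i ≠ 0 ∧ m j ≠ 0 := by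
  classical
  refine ⟨fun h => ?_, fun ⟨hi, hj⟩ a => ?_⟩
  · have hi := h i
    have hj := h j
    simp only [Finsupp.add_apply, Finsupp.single_eq_same, Finsupp.single_eq_of_ne hij,
      Finsupp.single_eq_of_ne hij.symm, add_zero, zero_add] at hi hj
    omega
  · rcases eq_or_ne a i with rfl | hai
    · simpa [hij] using Nat.one_le_iff_ne_zero.2 hi
    · rcases eq_or_ne a j with rfl | haj
      · simpa [hij] using Nat.one_le_iff_ne_zero.2 hj
      · simp [hai, haj]

theorem degree_X_mul_X [Nontrivial R] (ord : MonomialOrder σ) (i j : σ) :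
    ord.degree (X i * X j : MvPolynomial σ R) = Finsupp.single i 1 + Finsupp.single j 1 := by
  rw [ord.degree_mul_of_mul_leadingCoeff_ne_zero (by simp), ord.degree_X,
    ord.degree_X]

theorem degree_lex_X_mul_X_lt [LinearOrder σ] [WellFoundedGT σ] [Nontrivial R] {i j p q : σ}
    (hij : i < j) (hip : i < p) (hiq : i < q) :
    MonomialOrder.lex.toSyn (MonomialOrder.lex.degree (X p * X q : MvPolynomial σ R)) <
      MonomialOrder.lex.toSyn (MonomialOrder.lex.degree (X i * X j : MvPolynomial σ R)) := by
  rw [degree_X_mul_X, degree_X_mul_X, MonomialOrder.lex_lt_iff, Finsupp.Lex.lt_iff]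
  refine ⟨i, fun a ha => ?_, ?_⟩
  · simp [ha.ne, (ha.trans hij).ne, (ha.trans hip).ne, (ha.trans hiq).ne]
  · simp [hij.ne, hip.ne, hiq.ne]

theorem ringKrullDim_quotient_add_one_le_of_lt {I J : Ideal R} [I.IsPrime] (hIJ : I < J) :
    ringKrullDim (R ⧸ J) + 1 ≤ ringKrullDim (R ⧸ I) := by
  obtain ⟨r, hrJ, hrI⟩ := SetLike.exists_of_lt hIJ
  refine ringKrullDim_succ_le_of_surjective (Ideal.Quotient.factor hIJ.le)
    (Ideal.Quotient.factor_surjective hIJ.le) (r := Ideal.Quotient.mk I r) ?_ ?_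
  · rwa [mem_nonZeroDivisors_iff_ne_zero, Ne, Ideal.Quotient.eq_zero_iff_mem]
  · rwa [Ideal.Quotient.factor_mk, Ideal.Quotient.eq_zero_iff_mem]

theorem ringKrullDim_quotient_ker_of_surjective {A B : Type*} [CommRing A] [CommRing B]
    [Algebra R A] [Algebra R B] {f : A →ₐ[R] B} (hf : Function.Surjective f) :
    ringKrullDim (A ⧸ RingHom.ker f) = ringKrullDim B :=
  ringKrullDim_eq_of_ringEquiv (Ideal.quotientKerAlgEquivOfSurjective hf).toRingEquiv

theorem surjective_killCompl {τ : Type*} {f : τ → σ} (hf : Function.Injective f) :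
    Function.Surjective (killCompl hf : MvPolynomial σ R →ₐ[R] MvPolynomial τ R) :=
  Function.LeftInverse.surjective (killCompl_rename_app hf)

theorem killCompl_X_of_notMem_range {τ : Type*} {f : τ → σ} (hf : Function.Injective f) {i : σ}
    (hi : i ∉ Set.range f) : killCompl hf (X i : MvPolynomial σ R) = 0 := by
  rw [killCompl, aeval_X, dif_neg hi]

end General

section Cone

variable (R : Type*) [CommRing R]

/-- The equation `z₀z₀' + z₂z₂'` of a quadric surface in `P³`; the variables `0, …, 5` are
`z₀, z₀', z₂, z₂', y, y'`. -/
noncomputable def quadric : MvPolynomial (Fin 6) R := X 0 * X 1 + X 2 * X 3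

/-- The bilinear equation `z₂y' + z₂'y`, which makes `(y : y')` the ratio `(z₂ : -z₂')`. -/
noncomputable def incidence : MvPolynomial (Fin 6) R := X 2 * X 5 + X 3 * X 4

/-- The ideal of the affine cone over `Z`, in `𝔸⁴ × 𝔸²`. -/
noncomputable def coneIdeal : Ideal (MvPolynomial (Fin 6) R) :=
  Ideal.span {quadric R, incidence R}

/-- The substitution dual to the monomial parametrization of the cone by `𝔸⁴`. It exhibits the
coordinate ring of the cone as a subring of a polynomial ring. -/
noncomputable def coneParam : MvPolynomial (Fin 6) R →ₐ[R] MvPolynomial (Fin 4) R :=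
  aeval ![X 0 ^ 2 * X 2, X 1 ^ 2 * X 3, X 0 * X 1 * X 2, -(X 0 * X 1 * X 3), X 2, X 3]

/-- Exponents of the standard monomials modulo `coneIdeal`: those divisible by neither of the
lexicographic leading terms `X 0 * X 1` and `X 2 * X 5` of the two equations. -/
def IsStandard (m : Fin 6 →₀ ℕ) : Prop := (m 0 = 0 ∨ m 1 = 0) ∧ (m 2 = 0 ∨ m 5 = 0)

/-- The action of `coneParam` on exponents: it sends `X ^ m` to `± X ^ paramExponent m`. -/
noncomputable def paramExponent (m : Fin 6 →₀ ℕ) : Fin 4 →₀ ℕ :=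
  Finsupp.equivFunOnFinite.symm
    ![2 * m 0 + m 2 + m 3, 2 * m 1 + m 2 + m 3, m 0 + m 2 + m 4, m 1 + m 3 + m 5]

/-- The substitution dual to a parametrization of the hypersurface `z₂y' + z₂'y = 0` by `𝔸⁵`. Its
kernel is the prime between `0` and `coneIdeal` used to bound the dimension. -/
noncomputable def incidenceParam : MvPolynomial (Fin 6) R →ₐ[R] MvPolynomial (Fin 5) R :=
  aeval ![X 0, X 1, X 2 * X 3, -(X 2 * X 4), X 3, X 4]

variable {R}

theorem coneIdeal_le_iff {I : Ideal (MvPolynomial (Fin 6) R)} :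
    coneIdeal R ≤ I ↔ quadric R ∈ I ∧ incidence R ∈ I := by
  rw [coneIdeal, Ideal.span_le, Set.pair_subset_iff, SetLike.mem_coe, SetLike.mem_coe]

theorem isStandard_iff {m : Fin 6 →₀ ℕ} :
    IsStandard m ↔ ¬ Finsupp.single 0 1 + Finsupp.single 1 1 ≤ m ∧
      ¬ Finsupp.single 2 1 + Finsupp.single 5 1 ≤ m := by
  rw [single_add_single_le_iff (by decide), single_add_single_le_iff (by decide), IsStandard]
  tauto

theorem exists_sub_mem_coneIdeal_isStandard (f : MvPolynomial (Fin 6) R) :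
    ∃ g, f - g ∈ coneIdeal R ∧ ∀ m ∈ g.support, IsStandard m := by
  nontriviality R
  have quadric_lt := degree_lex_X_mul_X_lt (R := R) (show (0 : Fin 6) < 1 by decide)
    (show (0 : Fin 6) < 2 by decide) (show (0 : Fin 6) < 3 by decide)
  have incidence_lt := degree_lex_X_mul_X_lt (R := R) (show (2 : Fin 6) < 5 by decide)
    (show (2 : Fin 6) < 3 by decide) (show (2 : Fin 6) < 4 by decide)
  have monic : ∀ b ∈ ({quadric R, incidence R} : Set _), MonomialOrder.lex.Monic b := by
    rintro b (rfl | rfl)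
    · exact (MonomialOrder.monic_X.mul MonomialOrder.monic_X).add_of_lt quadric_lt
    · exact (MonomialOrder.monic_X.mul MonomialOrder.monic_X).add_of_lt incidence_lt
  obtain ⟨q, r, hf, -, hr⟩ := MonomialOrder.lex.div_set
    (fun b hb => (monic b hb).leadingCoeff_eq_one ▸ isUnit_one) f
  refine ⟨r, ?_, fun m hm => isStandard_iff.2 ⟨?_, ?_⟩⟩
  · rw [hf, add_sub_cancel_right, coneIdeal, Ideal.span, Finsupp.span_eq_range_linearCombination]
    exact LinearMap.mem_range_self _ q
  · simpa only [quadric, MonomialOrder.degree_add_of_lt quadric_lt, degree_X_mul_X]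
      using hr m hm (quadric R) (Or.inl rfl)
  · simpa only [incidence, MonomialOrder.degree_add_of_lt incidence_lt, degree_X_mul_X]
      using hr m hm (incidence R) (Or.inr rfl)

theorem injOn_paramExponent : Set.InjOn paramExponent {m | IsStandard m} := by
  rintro m ⟨h01, h25⟩ m' ⟨h01', h25'⟩ h
  have h0 := DFunLike.congr_fun h 0
  have h1 := DFunLike.congr_fun h 1
  have h2 := DFunLike.congr_fun h 2
  have h3 := DFunLike.congr_fun h 3
  simp only [paramExponent, Finsupp.equivFunOnFinite_symm_apply_apply, Matrix.cons_val]
    at h0 h1 h2 h3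
  ext a
  fin_cases a <;> simp only [Fin.reduceFinMk, Fin.zero_eta, Fin.mk_one] <;> omega

theorem coneParam_monomial (m : Fin 6 →₀ ℕ) (c : R) :
    coneParam R (monomial m c) = monomial (paramExponent m) ((-1) ^ m 3 * c) := by
  rw [coneParam, aeval_monomial, monomial_eq, Finsupp.prod_fintype _ _ (by simp),
    Finsupp.prod_fintype _ _ (by simp), Fin.prod_univ_six, Fin.prod_univ_four]
  simp only [algebraMap_eq, Matrix.cons_val, paramExponent,
    Finsupp.equivFunOnFinite_symm_apply_apply, C_mul, C_pow, C_neg, C_1]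
  rw [neg_pow (X 0 * X 1 * X 3 : MvPolynomial (Fin 4) R)]
  ring

theorem coeff_paramExponent_coneParam {g : MvPolynomial (Fin 6) R}
    (hg : ∀ m ∈ g.support, IsStandard m) {m : Fin 6 →₀ ℕ} (hm : IsStandard m) :
    coeff (paramExponent m) (coneParam R g) = (-1) ^ m 3 * coeff m g := by
  conv_lhs => rw [g.as_sum, map_sum, coeff_sum]
  rw [Finset.sum_eq_single m]
  · rw [coneParam_monomial, coeff_monomial, if_pos rfl]
  · intro b hb hbm
    rw [coneParam_monomial, coeff_monomial, if_neg]
    exact fun h => hbm (injOn_paramExponent (hg b hb) hm h)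
  · intro hm
    rw [notMem_support_iff.1 hm, map_zero, map_zero, coeff_zero]

theorem eq_zero_of_coneParam_eq_zero {g : MvPolynomial (Fin 6) R}
    (hg : ∀ m ∈ g.support, IsStandard m) (h : coneParam R g = 0) : g = 0 := by
  by_contra hg0
  obtain ⟨m, hm⟩ := support_nonempty.2 hg0
  have hcoeff := coeff_paramExponent_coneParam hg (hg m hm)
  rw [h, coeff_zero, eq_comm, neg_one_pow_mul_eq_zero_iff] at hcoeff
  exact mem_support_iff.1 hm hcoeff

theorem coneIdeal_eq_ker_coneParam : coneIdeal R = RingHom.ker (coneParam R) := by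
  have hle : coneIdeal R ≤ RingHom.ker (coneParam R) := by
    rw [coneIdeal_le_iff, RingHom.mem_ker, RingHom.mem_ker]
    constructor
    · simp only [quadric, coneParam, map_add, map_mul, aeval_X, Matrix.cons_val]
      ring
    · simp only [incidence, coneParam, map_add, map_mul, aeval_X, Matrix.cons_val]
      ring
  refine le_antisymm hle fun f hf => ?_
  obtain ⟨g, hfg, hg⟩ := exists_sub_mem_coneIdeal_isStandard f
  have hg_ker : coneParam R g = 0 := by
    simpa [RingHom.mem_ker.1 hf] using RingHom.mem_ker.1 (hle hfg)
  simpa [eq_zero_of_coneParam_eq_zero hg hg_ker] using hfg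

theorem isPrime_coneIdeal [IsDomain R] : (coneIdeal R).IsPrime :=
  coneIdeal_eq_ker_coneParam (R := R) ▸ RingHom.ker_isPrime _

theorem bot_lt_ker_incidenceParam [Nontrivial R] : ⊥ < RingHom.ker (incidenceParam R) := by
  refine bot_lt_iff_ne_bot.2 (Submodule.ne_bot_iff _ |>.2 ⟨incidence R, ?_, fun h => ?_⟩)
  · rw [RingHom.mem_ker]
    simp only [incidence, incidenceParam, map_add, map_mul, aeval_X, Matrix.cons_val]
    ring
  · simpa [incidence] using congrArg (eval ![0, 0, 1, 0, 0, 1]) h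

theorem ker_incidenceParam_lt_coneIdeal [Nontrivial R] :
    RingHom.ker (incidenceParam R) < coneIdeal R := by
  have hfactor : coneParam R =
      (aeval ![X 0 ^ 2 * X 2, X 1 ^ 2 * X 3, X 0 * X 1, X 2, X 3]).comp (incidenceParam R) := by
    ext i : 1
    fin_cases i <;> simp [coneParam, incidenceParam]
  refine SetLike.lt_iff_le_and_exists.2 ⟨fun f hf => ?_, quadric R, ?_, fun h => ?_⟩
  · rw [coneIdeal_eq_ker_coneParam, RingHom.mem_ker, hfactor, AlgHom.comp_apply,
      RingHom.mem_ker.1 hf, map_zero]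
  · exact (coneIdeal_le_iff.1 le_rfl).1
  · simpa [quadric, incidenceParam] using
      congrArg (eval ![1, 1, 0, 0, 0]) (RingHom.mem_ker.1 h)

/-- The coordinates `z₀', y, y'`, which are free on the linear subspace `z₀ = z₂ = z₂' = 0` of the
cone. -/
def freeCoord : Fin 3 → Fin 6 := ![1, 4, 5]

theorem injective_freeCoord : Function.Injective freeCoord := by decide

theorem coneIdeal_lt_ker_killCompl [Nontrivial R] :
    coneIdeal R < RingHom.ker (killCompl injective_freeCoord : _ →ₐ[R] _) := by
  have h0 := killCompl_X_of_notMem_range (R := R) injective_freeCoord (i := 0) (by decide)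
  have h2 := killCompl_X_of_notMem_range (R := R) injective_freeCoord (i := 2) (by decide)
  have h3 := killCompl_X_of_notMem_range (R := R) injective_freeCoord (i := 3) (by decide)
  refine SetLike.lt_iff_le_and_exists.2 ⟨coneIdeal_le_iff.2 ⟨?_, ?_⟩, X 0, h0, fun h => ?_⟩
  · simp [RingHom.mem_ker, quadric, h0, h2]
  · simp [RingHom.mem_ker, incidence, h2, h3]
  · rw [coneIdeal_eq_ker_coneParam, RingHom.mem_ker] at h
    simpa [coneParam] using congrArg (eval ![1, 0, 1, 0]) h

theorem ringKrullDim_quotient_coneIdeal_le [IsDomain R] [IsNoetherianRing R] :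
    ringKrullDim (MvPolynomial (Fin 6) R ⧸ coneIdeal R) ≤ ringKrullDim R + 4 := by
  have := RingHom.ker_isPrime (incidenceParam R)
  rw [← ENat.WithBot.add_le_add_natCast_right_iff (c := 2)]
  calc ringKrullDim (MvPolynomial (Fin 6) R ⧸ coneIdeal R) + (2 : ℕ)
      = ringKrullDim (MvPolynomial (Fin 6) R ⧸ coneIdeal R) + 1 + 1 := by
        rw [add_assoc, one_add_one_eq_two, Nat.cast_ofNat]
    _ ≤ ringKrullDim (MvPolynomial (Fin 6) R ⧸ RingHom.ker (incidenceParam R)) + 1 := by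
        gcongr
        exact ringKrullDim_quotient_add_one_le_of_lt ker_incidenceParam_lt_coneIdeal
    _ ≤ ringKrullDim (MvPolynomial (Fin 6) R ⧸ (⊥ : Ideal (MvPolynomial (Fin 6) R))) :=
        ringKrullDim_quotient_add_one_le_of_lt bot_lt_ker_incidenceParam
    _ = ringKrullDim (MvPolynomial (Fin 6) R) :=
        ringKrullDim_eq_of_ringEquiv (RingEquiv.quotientBot _)
    _ = ringKrullDim R + (4 + 2 : ℕ) := by
        rw [MvPolynomial.ringKrullDim_of_isNoetherianRing, Nat.card_fin]
    _ = ringKrullDim R + 4 + (2 : ℕ) := by rw [Nat.cast_add, add_assoc, Nat.cast_ofNat]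

theorem le_ringKrullDim_quotient_coneIdeal [IsDomain R] :
    ringKrullDim R + 4 ≤ ringKrullDim (MvPolynomial (Fin 6) R ⧸ coneIdeal R) := by
  have := isPrime_coneIdeal (R := R)
  calc ringKrullDim R + 4
      = ringKrullDim R + (3 : ℕ) + 1 := by
        rw [add_assoc]
        norm_num
    _ ≤ ringKrullDim (MvPolynomial (Fin 3) R) + 1 := by
        gcongr
        simpa only [Nat.card_fin] using
          ringKrullDim_add_natCard_le_ringKrullDim_mvPolynomial (R := R) (Fin 3)
    _ = ringKrullDim (MvPolynomial (Fin 6) R ⧸ RingHom.ker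
          (killCompl injective_freeCoord : _ →ₐ[R] _)) + 1 := by
        rw [ringKrullDim_quotient_ker_of_surjective (surjective_killCompl _)]
    _ ≤ ringKrullDim (MvPolynomial (Fin 6) R ⧸ coneIdeal R) :=
        ringKrullDim_quotient_add_one_le_of_lt coneIdeal_lt_ker_killCompl

theorem linearIndependent_jacobian_rows {K : Type*} [CommRing K] [IsDomain K] {v : Fin 6 → K}
    (hz : ¬(v 0 = 0 ∧ v 1 = 0 ∧ v 2 = 0 ∧ v 3 = 0)) (hy : ¬(v 4 = 0 ∧ v 5 = 0)) :
    LinearIndependent K !![v 1, v 0, v 3, v 2, 0, 0; 0, 0, v 5, v 4, v 3, v 2].row := by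
  refine LinearIndependent.pair_iff.2 fun s t hst => ?_
  have h0 : s * v 1 = 0 := by simpa using congrFun hst 0
  have h1 : s * v 0 = 0 := by simpa using congrFun hst 1
  have h2 : s * v 3 + t * v 5 = 0 := by simpa using congrFun hst 2
  have h3 : s * v 2 + t * v 4 = 0 := by simpa using congrFun hst 3
  have h4 : t * v 3 = 0 := by simpa using congrFun hst 4
  have h5 : t * v 2 = 0 := by simpa using congrFun hst 5
  have ht : t = 0 := by
    by_contra ht
    have hv2 : v 2 = 0 := (mul_eq_zero.1 h5).resolve_left ht
    have hv3 : v 3 = 0 := (mul_eq_zero.1 h4).resolve_left ht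
    exact hy ⟨by simpa [hv2, ht] using h3, by simpa [hv3, ht] using h2⟩
  refine ⟨by_contra fun hs => hz ⟨?_, ?_, ?_, ?_⟩, ht⟩
  · exact (mul_eq_zero.1 h1).resolve_left hs
  · exact (mul_eq_zero.1 h0).resolve_left hs
  · simpa [ht, hs] using h3
  · simpa [ht, hs] using h2

theorem rank_jacobian {K : Type*} [Field K] [Algebra R K] (v : Fin 6 → K)
    (hz : ¬(v 0 = 0 ∧ v 1 = 0 ∧ v 2 = 0 ∧ v 3 = 0)) (hy : ¬(v 4 = 0 ∧ v 5 = 0)) :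
    (Matrix.of fun (i : Fin 2) (j : Fin 6) =>
      aeval v (pderiv j (![quadric R, incidence R] i))).rank = 2 := by
  have hjacobian : (Matrix.of fun (i : Fin 2) (j : Fin 6) =>
      aeval v (pderiv j (![quadric R, incidence R] i))) =
      !![v 1, v 0, v 3, v 2, 0, 0; 0, 0, v 5, v 4, v 3, v 2] := by
    ext i j
    fin_cases i <;> fin_cases j <;> simp [quadric, incidence, pderiv_X]
  rw [hjacobian]
  simpa only [Fintype.card_fin] using (linearIndependent_jacobian_rows hz hy).rank_matrix

end Cone

theorem stmt6_general {R K : Type*} [CommRing R] [IsDomain R] [IsNoetherianRing R] [Field K]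
    [Algebra R K] :
    (coneIdeal R).IsPrime ∧
    ringKrullDim (MvPolynomial (Fin 6) R ⧸ coneIdeal R) = ringKrullDim R + 4 ∧
    ∀ v : Fin 6 → K, ¬(v 0 = 0 ∧ v 1 = 0 ∧ v 2 = 0 ∧ v 3 = 0) → ¬(v 4 = 0 ∧ v 5 = 0) →
      (Matrix.of fun (i : Fin 2) (j : Fin 6) =>
        aeval v (pderiv j (![quadric R, incidence R] i))).rank = 2 :=
  ⟨isPrime_coneIdeal,
    le_antisymm ringKrullDim_quotient_coneIdeal_le le_ringKrullDim_quotient_coneIdeal,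
    rank_jacobian⟩

/-- The biprojective variety `Z ⊆ P³ × P¹` cut out by `z₀z₀' + z₂z₂' = 0` and
`z₂y' + z₂'y = 0` is a smooth irreducible projective variety of dimension 2.
This is encoded via the affine cone in `𝔸⁴ × 𝔸²` (variables `0,1,2,3 = z₀,z₀',z₂,z₂'`
and `4,5 = y,y'`): the defining ideal is prime (irreducibility), the cone has Krull
dimension `4 = 2 + 1 + 1` (so `Z` has dimension 2), and at every point of the cone with
both components nonzero the Jacobian matrix has rank 2 (smoothness, by the Jacobian
criterion); projectivity holds by construction. -/
theorem stmt6 {k : Type} [Field k] [IsAlgClosed k] :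
    let p₁ : MvPolynomial (Fin 6) k := X 0 * X 1 + X 2 * X 3
    let p₂ : MvPolynomial (Fin 6) k := X 2 * X 5 + X 3 * X 4
    let I : Ideal (MvPolynomial (Fin 6) k) := Ideal.span {p₁, p₂}
    I.IsPrime ∧
    ringKrullDim (MvPolynomial (Fin 6) k ⧸ I) = 4 ∧
    ∀ v : Fin 6 → k, eval v p₁ = 0 → eval v p₂ = 0 →
      ¬(v 0 = 0 ∧ v 1 = 0 ∧ v 2 = 0 ∧ v 3 = 0) → ¬(v 4 = 0 ∧ v 5 = 0) →
      (Matrix.of fun (i : Fin 2) (j : Fin 6) =>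
        eval v (pderiv j (![p₁, p₂] i))).rank = 2 := by
  obtain ⟨hprime, hdim, hrank⟩ := stmt6_general (R := k) (K := k)
  exact ⟨hprime, by rwa [ringKrullDim_eq_zero_of_field, zero_add] at hdim, fun v _ _ => hrank v⟩
end

section
/- Let M be the 6×6 matrix over ℚ(q) with rows and columns indexed by H = (0,1,3,4,9,12) whose (h,h') entry is q^{-h-h'} Γ_{E_h ⊗ E_{h'}}, where E_0=1, E_1=ε, E_3=ρ, E_4=ρ', E_9=ε', E_12=s are the irreducible representations of the dihedral group W of order 12 and Γ_E = (1/12) Σ_{w∈W} (q^2-1)(q^6-1) tr(w,E)/det(q - w) (determinant in the reflection representation). Then M admits a factorization M = Πᵗ A Π where A is the diagonal matrix with entries q^{-2}(q^2-1)(q^6-1), q^{-4}(q^2-1)(q^6-1), q^{-8}(q^2-1)(q^6-1), q^{-8}(q^6-1), q^{-18}(q^6-1), q^{-18}, and Πᵗ is the upper triangular matrix with rows (1,0,q^2,q^2,q^6,q^6), (0,1,0,q^2,0,q^8), (0,0,1,1,q^4,q^4+q^8), (0,0,0,1,q^4,q^4+q^6), (0,0,0,0,1,1), (0,0,0,0,0,1).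 -/
/-!
At a root of unity `a = ζ ^ j` the partial fraction
`(q² - 1) / ((q - a) (q - a⁻¹)) = q / (q - a) + a⁻¹ / (q - a⁻¹)` and the geometric sum
`(q ^ n - 1) / (q - a) = ∑ q ^ i a ^ (n - 1 - i)` reduce the fake degree of a character to
orthogonality of the powers of `ζ`: the two-dimensional character attached to `ζ ^ k` has fake
degree `q ^ k + q ^ (n - k)` in every dihedral group of order `2n`. For `n = 6`, decomposing the
products of irreducible characters gives all `Γ_{E ⊗ E'}`, and the factorization is compared entry
by entry.
-/

open Finset
open scoped Matrix

section CyclicSums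

theorem sum_range_pow_eq_zero {K : Type*} [DivisionRing K] {n : ℕ} {a : K} (ha : a ^ n = 1)
    (ha1 : a ≠ 1) : ∑ j ∈ range n, a ^ j = 0 := by
  rw [geom_sum_eq ha1, ha, sub_self, zero_div]

theorem sub_ne_zero_of_pow_ne_one {R : Type*} [Ring R] {n : ℕ} {a q : R} (ha : a ^ n = 1)
    (hq : q ^ n ≠ 1) : q - a ≠ 0 :=
  sub_ne_zero.2 fun h => hq (h ▸ ha)

theorem primitiveRoot_pow_half_eq_neg_one {R : Type*} [CommRing R] [IsDomain R] {m : ℕ} {ζ : R}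
    (hζ : IsPrimitiveRoot ζ (2 * m)) (hm : 0 < 2 * m) : ζ ^ m = -1 :=
  (hζ.pow hm (mul_comm 2 m)).eq_neg_one_of_two_right

theorem two_ne_zero_of_primitiveRoot {R : Type*} [CommRing R] [IsDomain R] {m : ℕ} {ζ : R}
    (hζ : IsPrimitiveRoot ζ (2 * m)) (hm : 0 < 2 * m) : (2 : R) ≠ 0 := by
  have : NeZero (2 * m) := ⟨hm.ne'⟩
  have hcast : ((2 * m : ℕ) : R) ≠ 0 := hζ.neZero'.ne
  rw [Nat.cast_mul] at hcast
  exact_mod_cast left_ne_zero_of_mul hcast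

variable {F : Type*} [Field F] {n k : ℕ} {ζ q : F}

theorem sum_range_primitiveRoot_pow (hζ : IsPrimitiveRoot ζ n) {i : ℕ} (hk : k < n) (hi : i < n) :
    ∑ j ∈ range n, (ζ ^ (k + n - i)) ^ j = if i = k then (n : F) else 0 := by
  split_ifs with h
  · simp [h, hζ.pow_eq_one]
  · refine sum_range_pow_eq_zero (by rw [pow_right_comm, hζ.pow_eq_one, one_pow]) ?_
    rw [Ne, hζ.pow_eq_one_iff_dvd]
    rintro ⟨c, hc⟩
    have hc1 : c = 1 := by
      have : 0 < c := Nat.pos_of_mul_pos_left (a := n) (by omega)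
      have : c < 2 := lt_of_mul_lt_mul_left (a := n) (by omega) n.zero_le
      omega
    subst hc1
    omega

theorem sum_primitiveRoot_pow_div_sub (hζ : IsPrimitiveRoot ζ n) (hq : q ^ n ≠ 1) (hk : k < n) :
    ∑ j ∈ range n, (ζ ^ j) ^ (k + 1) * ((q ^ n - 1) / (q - ζ ^ j)) = n * q ^ k := by
  have hpow (j : ℕ) : (ζ ^ j) ^ n = 1 := by rw [pow_right_comm, hζ.pow_eq_one, one_pow]
  have hgeom (j : ℕ) :
      (q ^ n - 1) / (q - ζ ^ j) = ∑ i ∈ range n, q ^ i * (ζ ^ j) ^ (n - 1 - i) := by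
    rw [div_eq_iff (sub_ne_zero_of_pow_ne_one (hpow j) hq), geom_sum₂_mul, hpow]
  calc ∑ j ∈ range n, (ζ ^ j) ^ (k + 1) * ((q ^ n - 1) / (q - ζ ^ j))
      = ∑ i ∈ range n, q ^ i * ∑ j ∈ range n, (ζ ^ (k + n - i)) ^ j := by
        simp only [hgeom, mul_sum]
        rw [sum_comm]
        refine sum_congr rfl fun i hi => sum_congr rfl fun j _ => ?_
        have hexp : k + n - i = k + 1 + (n - 1 - i) := by
          have := mem_range.1 hi
          omega
        rw [mul_left_comm, ← pow_add, ← hexp, ← pow_mul, ← pow_mul, mul_comm j]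
    _ = ∑ i ∈ range n, q ^ i * if i = k then (n : F) else 0 :=
        sum_congr rfl fun i hi => by rw [sum_range_primitiveRoot_pow hζ hk (mem_range.1 hi)]
    _ = n * q ^ k := by simp [hk, mul_comm]

theorem sq_sub_one_div_eq_add {a : F} (ha : a ≠ 0) (h : q - a ≠ 0) (h' : q - a⁻¹ ≠ 0) :
    (q ^ 2 - 1) / (q ^ 2 - (a + a⁻¹) * q + 1) = q / (q - a) + a⁻¹ / (q - a⁻¹) := by
  have hden : q ^ 2 - (a + a⁻¹) * q + 1 = (q - a) * (q - a⁻¹) := by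
    linear_combination -mul_inv_cancel₀ ha
  rw [hden, div_add_div _ _ h h']
  congr 1
  linear_combination mul_inv_cancel₀ ha

theorem cyclic_molien_sum_succ (hζ : IsPrimitiveRoot ζ n) (hq : q ^ n ≠ 1) (hk : k < n) :
    ∑ j ∈ range n, (q ^ 2 - 1) * (q ^ n - 1) * (ζ ^ (k + 1)) ^ j /
      (q ^ 2 - (ζ ^ j + ζ⁻¹ ^ j) * q + 1) = n * (q ^ (k + 1) + q ^ (n - (k + 1))) := by
  have hζ0 : ζ ≠ 0 := hζ.ne_zero (by omega)
  have hpow (j : ℕ) : (ζ ^ j) ^ n = 1 := by rw [pow_right_comm, hζ.pow_eq_one, one_pow]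
  have hinv (j : ℕ) : (ζ⁻¹ ^ j) ^ (n - (k + 1) + 1) = ζ⁻¹ ^ j * (ζ ^ j) ^ (k + 1) := by
    have hsplit : (ζ ^ j) ^ (n - (k + 1)) * (ζ ^ j) ^ (k + 1) = 1 := by
      rw [← pow_add, Nat.sub_add_cancel hk, hpow]
    rw [pow_succ', inv_pow, inv_pow, inv_eq_of_mul_eq_one_right hsplit]
  have hterm (j : ℕ) : (q ^ 2 - 1) * (q ^ n - 1) * (ζ ^ (k + 1)) ^ j /
        (q ^ 2 - (ζ ^ j + ζ⁻¹ ^ j) * q + 1) =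
      q * ((ζ ^ j) ^ (k + 1) * ((q ^ n - 1) / (q - ζ ^ j))) +
        (ζ⁻¹ ^ j) ^ (n - (k + 1) + 1) * ((q ^ n - 1) / (q - ζ⁻¹ ^ j)) := by
    have hfrac := sq_sub_one_div_eq_add (pow_ne_zero j hζ0)
      (sub_ne_zero_of_pow_ne_one (hpow j) hq)
      (sub_ne_zero_of_pow_ne_one (by rw [inv_pow, hpow, inv_one]) hq)
    rw [hinv, inv_pow, ← pow_mul, mul_comm (k + 1), pow_mul]
    linear_combination (q ^ n - 1) * (ζ ^ j) ^ (k + 1) * hfrac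
  simp only [hterm]
  rw [sum_add_distrib, ← mul_sum, sum_primitiveRoot_pow_div_sub hζ hq hk,
    sum_primitiveRoot_pow_div_sub hζ.inv hq (by omega)]
  ring

theorem sum_zmod_val [NeZero n] {M : Type*} [AddCommMonoid M] (f : ℕ → M) :
    ∑ j : ZMod n, f j.val = ∑ j ∈ range n, f j := by
  obtain _ | m := n
  · exact absurd rfl (NeZero.ne 0)
  · exact Fin.sum_univ_eq_sum_range f (m + 1)

theorem cyclic_molien_sum [NeZero n] (hζ : IsPrimitiveRoot ζ n) (hq : q ^ n ≠ 1) (hk : k ≤ n) :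
    ∑ j : ZMod n, (q ^ 2 - 1) * (q ^ n - 1) * (ζ ^ k) ^ j.val /
      (q ^ 2 - (ζ ^ j.val + ζ⁻¹ ^ j.val) * q + 1) = n * (q ^ k + q ^ (n - k)) := by
  obtain _ | k := k
  · obtain ⟨m, rfl⟩ := Nat.exists_eq_succ_of_ne_zero (NeZero.ne n)
    have h := cyclic_molien_sum_succ hζ hq m.lt_succ_self
    rw [hζ.pow_eq_one, ← sum_zmod_val] at h
    simpa [add_comm] using h
  · rw [← cyclic_molien_sum_succ hζ hq hk, ← sum_zmod_val]

end CyclicSums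

section Characters

variable {F : Type*} [Field F] {n : ℕ}

/-- The class function `r j ↦ a ^ j`, `sr j ↦ b * a ^ j` on the dihedral group of order `2n`. It is
a linear character when `a ^ n = a ^ 2 = b ^ 2 = 1`; the sign character is the case `a = 1`,
`b = -1`. -/
def linearCharacter {M : Type*} [Monoid M] (n : ℕ) (a b : M) : DihedralGroup n → M
  | .r j => a ^ j.val
  | .sr j => b * a ^ j.val

/-- The class function `r j ↦ z ^ j + z ^ (-j)`, `sr j ↦ 0` on the dihedral group of order `2n`.
When `z ^ n = 1` it is the character induced from the character `r j ↦ z ^ j` of the rotation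
subgroup; for `z` a primitive `n`-th root of unity it is the trace of the reflection
representation. -/
def planeCharacter (n : ℕ) (z : F) : DihedralGroup n → F
  | .r j => z ^ j.val + z⁻¹ ^ j.val
  | .sr _ => 0

theorem linearCharacter_mul_linearCharacter {M : Type*} [CommMonoid M] (a b c d : M) :
    linearCharacter n a b * linearCharacter n c d = linearCharacter n (a * c) (b * d) := by
  ext (j | j)
  · exact (mul_pow a c _).symm
  · simp only [Pi.mul_apply, linearCharacter, mul_pow, mul_mul_mul_comm]

theorem linearCharacter_mul_planeCharacter {a : F} (b z : F) (ha : a⁻¹ = a) :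
    linearCharacter n a b * planeCharacter n z = planeCharacter n (a * z) := by
  ext (j | j)
  · simp only [Pi.mul_apply, linearCharacter, planeCharacter, mul_inv, mul_pow, ha, mul_add]
  · exact mul_zero _

theorem planeCharacter_mul_planeCharacter (z w : F) :
    planeCharacter n z * planeCharacter n w =
      planeCharacter n (z * w) + planeCharacter n (z * w⁻¹) := by
  ext (j | j)
  · simp only [Pi.mul_apply, Pi.add_apply, planeCharacter, mul_inv, mul_pow, inv_inv]
    ring
  · simp [planeCharacter]

theorem map_linearCharacter {M N G : Type*} [Monoid M] [Monoid N] [FunLike G M N]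
    [MonoidHomClass G M N] (φ : G) (a b : M) (w : DihedralGroup n) :
    φ (linearCharacter n a b w) = linearCharacter n (φ a) (φ b) w := by
  cases w <;> simp [linearCharacter]

theorem map_planeCharacter {K : Type*} [Field K] (φ : K →+* F) (z : K) (w : DihedralGroup n) :
    φ (planeCharacter n z w) = planeCharacter n (φ z) w := by
  cases w <;> simp [planeCharacter]

end Characters

section FakeDegree

variable {F : Type*} [Field F] {n k : ℕ} [NeZero n] {ζ q : F}

/-- The fake degree `Γ_χ = (1 / 2n) ∑ w, (q² - 1) (q ^ n - 1) χ(w) / det (q - w)` at the point `q`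
of a class function `χ` on the dihedral group of order `2n`. The determinant is taken in the
reflection representation with rotation eigenvalues `ζ` and `ζ⁻¹`, where it is
`q² - tr(w) q + det(w)`. -/
def fakeDegree (ζ q : F) (χ : DihedralGroup n → F) : F :=
  (2 * (n : F))⁻¹ * ∑ w, (q ^ 2 - 1) * (q ^ n - 1) * χ w /
    (q ^ 2 - planeCharacter n ζ w * q + linearCharacter n 1 (-1) w)

theorem fakeDegree_add (χ ψ : DihedralGroup n → F) :
    fakeDegree ζ q (χ + ψ) = fakeDegree ζ q χ + fakeDegree ζ q ψ := by
  simp only [fakeDegree, Pi.add_apply, mul_add, add_div, sum_add_distrib]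

theorem fakeDegree_map {K : Type*} [Field K] (φ : K →+* F) (ζ : K) (χ : DihedralGroup n → K) :
    fakeDegree (φ ζ) q (φ ∘ χ) =
      φ (2 * n)⁻¹ * ∑ w, (q ^ 2 - 1) * (q ^ n - 1) * φ (χ w) /
        (q ^ 2 - φ (planeCharacter n ζ w) * q + φ (linearCharacter n 1 (-1) w)) := by
  simp only [fakeDegree, Function.comp_apply, map_planeCharacter, map_linearCharacter, map_one,
    map_neg, map_inv₀, map_mul, map_ofNat, map_natCast]

theorem sum_dihedralGroup {M : Type*} [AddCommMonoid M] (f : DihedralGroup n → M) :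
    ∑ w, f w = ∑ j : ZMod n, f (.r j) + ∑ j : ZMod n, f (.sr j) := by
  rw [← DihedralGroup.equivSum.symm.sum_comp, Fintype.sum_sum_type]
  rfl

theorem fakeDegree_planeCharacter (hζ : IsPrimitiveRoot ζ n) (hq : q ^ n ≠ 1) (h2 : (2 : F) ≠ 0)
    (hk : k ≤ n) : fakeDegree ζ q (planeCharacter n (ζ ^ k)) = q ^ k + q ^ (n - k) := by
  have hn : (n : F) ≠ 0 := hζ.neZero'.ne
  have hinv : (ζ ^ k)⁻¹ = ζ ^ (n - k) :=
    inv_eq_of_mul_eq_one_right (by rw [← pow_add, Nat.add_sub_cancel' hk, hζ.pow_eq_one])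
  simp only [fakeDegree, sum_dihedralGroup, planeCharacter, linearCharacter, hinv, one_pow,
    mul_zero, zero_div, sum_const_zero, add_zero, mul_add _ _ (_ ^ _), add_div, sum_add_distrib]
  rw [cyclic_molien_sum hζ hq hk, cyclic_molien_sum hζ hq (n.sub_le k), Nat.sub_sub_self hk]
  field_simp
  ring

theorem fakeDegree_linearCharacter (hζ : IsPrimitiveRoot ζ n) (hq : q ^ n ≠ 1) (hq2 : q ^ 2 ≠ 1)
    (hk : k ≤ n) (b : F) :
    fakeDegree ζ q (linearCharacter n (ζ ^ k) b) =
      (2 * (n : F))⁻¹ * (n * (q ^ k + q ^ (n - k)) +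
        (q ^ n - 1) * (b * ∑ j ∈ range n, (ζ ^ k) ^ j)) := by
  have hq2' : q ^ 2 - 1 ≠ 0 := sub_ne_zero.2 hq2
  have hrefl (x : F) : (q ^ 2 - 1) * (q ^ n - 1) * x / (q ^ 2 - 0 * q + -1 * 1) =
      (q ^ n - 1) * x := by
    rw [zero_mul, sub_zero, mul_one, ← sub_eq_add_neg]
    field_simp
  simp only [fakeDegree, sum_dihedralGroup, planeCharacter, linearCharacter, one_pow, hrefl,
    ← mul_sum]
  rw [← cyclic_molien_sum hζ hq hk, ← sum_zmod_val]

theorem fakeDegree_linearCharacter_one (hζ : IsPrimitiveRoot ζ n) (hq : q ^ n ≠ 1)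
    (hq2 : q ^ 2 ≠ 1) (b : F) :
    fakeDegree ζ q (linearCharacter n 1 b) = (1 + q ^ n + b * (q ^ n - 1)) / 2 := by
  have hn : (n : F) ≠ 0 := hζ.neZero'.ne
  have h := fakeDegree_linearCharacter hζ hq hq2 n.zero_le b
  simp only [pow_zero, one_pow, sum_const, card_range, nsmul_one, Nat.sub_zero] at h
  rw [h]
  field_simp

theorem fakeDegree_trivialCharacter (hζ : IsPrimitiveRoot ζ n) (hq : q ^ n ≠ 1) (hq2 : q ^ 2 ≠ 1)
    (h2 : (2 : F) ≠ 0) : fakeDegree ζ q (linearCharacter n 1 1) = q ^ n := by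
  rw [fakeDegree_linearCharacter_one hζ hq hq2, div_eq_iff h2]
  ring

theorem fakeDegree_signCharacter (hζ : IsPrimitiveRoot ζ n) (hq : q ^ n ≠ 1) (hq2 : q ^ 2 ≠ 1)
    (h2 : (2 : F) ≠ 0) : fakeDegree ζ q (linearCharacter n 1 (-1)) = 1 := by
  rw [fakeDegree_linearCharacter_one hζ hq hq2, div_eq_iff h2]
  ring

theorem fakeDegree_linearCharacter_neg_one {m : ℕ} (hζ : IsPrimitiveRoot ζ (2 * m)) [NeZero (2 * m)]
    (hq : q ^ (2 * m) ≠ 1) (b : F) :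
    fakeDegree ζ q (linearCharacter (2 * m) (-1) b) = q ^ m := by
  have h2 := two_ne_zero_of_primitiveRoot hζ (NeZero.pos _)
  have hneg := primitiveRoot_pow_half_eq_neg_one hζ (NeZero.pos _)
  have hn : ((2 * m : ℕ) : F) ≠ 0 := hζ.neZero'.ne
  have hne : (-1 : F) ≠ 1 := by rwa [Ne, neg_eq_iff_add_eq_zero, one_add_one_eq_two]
  have hq2 : q ^ 2 ≠ 1 := fun h => hq (by rw [pow_mul, h, one_pow])
  have hsum : ∑ j ∈ range (2 * m), (-1 : F) ^ j = 0 :=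
    sum_range_pow_eq_zero (by rw [pow_mul, neg_one_sq, one_pow]) hne
  rw [← hneg, fakeDegree_linearCharacter hζ hq hq2 (by omega), hneg, hsum,
    show 2 * m - m = m by omega, mul_zero, mul_zero, add_zero, ← two_mul]
  field_simp

theorem fakeDegree_planeCharacter_mul {l : ℕ} (hζ : IsPrimitiveRoot ζ n) (hq : q ^ n ≠ 1)
    (h2 : (2 : F) ≠ 0) (hkl : k ≤ l) (hn : k + l ≤ n) :
    fakeDegree ζ q (planeCharacter n (ζ ^ k) * planeCharacter n (ζ ^ l)) =
      q ^ (k + l) + q ^ (n - (k + l)) + (q ^ (l - k) + q ^ (n - (l - k))) := by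
  have hζ0 : ζ ≠ 0 := hζ.ne_zero (NeZero.ne n)
  rw [mul_comm, planeCharacter_mul_planeCharacter, ← pow_add, add_comm l, ← pow_sub₀ ζ hζ0 hkl,
    fakeDegree_add, fakeDegree_planeCharacter hζ hq h2 hn,
    fakeDegree_planeCharacter hζ hq h2 (by omega)]

theorem fakeDegree_linearCharacter_neg_one_mul_planeCharacter {m : ℕ} [NeZero (2 * m)]
    (hζ : IsPrimitiveRoot ζ (2 * m)) (hq : q ^ (2 * m) ≠ 1) (hk : k ≤ m) (b : F) :
    fakeDegree ζ q (linearCharacter (2 * m) (-1) b * planeCharacter (2 * m) (ζ ^ k)) =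
      q ^ (m + k) + q ^ (m - k) := by
  have h2 := two_ne_zero_of_primitiveRoot hζ (NeZero.pos _)
  have hneg := primitiveRoot_pow_half_eq_neg_one hζ (NeZero.pos _)
  rw [linearCharacter_mul_planeCharacter _ _ inv_neg_one, ← hneg, ← pow_add,
    fakeDegree_planeCharacter hζ hq h2 (by omega), show 2 * m - (m + k) = m - k by omega]

end FakeDegree

section OrderTwelve

variable {F : Type*} [Field F] {ζ q : F}

/-- The irreducible characters `1, ε, ρ, ρ', ε', s` of the dihedral group of order 12, in the order
`E_0, E_1, E_3, E_4, E_9, E_12`. -/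
def irreducibleCharacter (ζ : F) : Fin 6 → DihedralGroup 6 → F :=
  ![linearCharacter 6 1 1, linearCharacter 6 (-1) (-1), planeCharacter 6 ζ,
    planeCharacter 6 (ζ ^ 2), linearCharacter 6 (-1) 1, linearCharacter 6 1 (-1)]

/-- The exponents `h` indexing the irreducible characters `E_h`, in the order of
`irreducibleCharacter`. -/
def irreducibleIndex : Fin 6 → ℤ :=
  ![0, 1, 3, 4, 9, 12]

/-- The diagonal factor `A` of the matrix `q ^ (-h - h') Γ_{E_h ⊗ E_h'}`. -/
def diagonalFactor (q : F) : Matrix (Fin 6) (Fin 6) F :=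
  Matrix.diagonal ![q ^ (-2 : ℤ) * (q ^ 2 - 1) * (q ^ 6 - 1),
    q ^ (-4 : ℤ) * (q ^ 2 - 1) * (q ^ 6 - 1),
    q ^ (-8 : ℤ) * (q ^ 2 - 1) * (q ^ 6 - 1),
    q ^ (-8 : ℤ) * (q ^ 6 - 1), q ^ (-18 : ℤ) * (q ^ 6 - 1), q ^ (-18 : ℤ)]

/-- The upper unitriangular factor `ᵗΠ` of the matrix `q ^ (-h - h') Γ_{E_h ⊗ E_h'}`. -/
def unitriangularFactor (q : F) : Matrix (Fin 6) (Fin 6) F :=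
  !![1, 0, q ^ 2, q ^ 2, q ^ 6, q ^ 6;
     0, 1, 0, q ^ 2, 0, q ^ 8;
     0, 0, 1, 1, q ^ 4, q ^ 4 + q ^ 8;
     0, 0, 0, 1, q ^ 4, q ^ 4 + q ^ 6;
     0, 0, 0, 0, 1, 1;
     0, 0, 0, 0, 0, 1]

theorem fakeDegree_irreducibleCharacter_mul (hζ : IsPrimitiveRoot ζ 6) (hq : q ^ 6 ≠ 1) :
    Matrix.of (fun i j => fakeDegree ζ q (irreducibleCharacter ζ i * irreducibleCharacter ζ j)) =
      !![q ^ 6, q ^ 3, q + q ^ 5, q ^ 2 + q ^ 4, q ^ 3, 1;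
         q ^ 3, q ^ 6, q ^ 4 + q ^ 2, q ^ 5 + q, 1, q ^ 3;
         q + q ^ 5, q ^ 4 + q ^ 2, q ^ 2 + q ^ 4 + (1 + q ^ 6), q ^ 3 + q ^ 3 + (q + q ^ 5),
           q ^ 4 + q ^ 2, q + q ^ 5;
         q ^ 2 + q ^ 4, q ^ 5 + q, q ^ 3 + q ^ 3 + (q + q ^ 5), q ^ 4 + q ^ 2 + (1 + q ^ 6),
           q ^ 5 + q, q ^ 2 + q ^ 4;
         q ^ 3, 1, q ^ 4 + q ^ 2, q ^ 5 + q, q ^ 6, q ^ 3;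
         1, q ^ 3, q + q ^ 5, q ^ 2 + q ^ 4, q ^ 3, q ^ 6] := by
  have h2 : (2 : F) ≠ 0 := two_ne_zero_of_primitiveRoot (m := 3) hζ (by decide)
  have hq2 : q ^ 2 ≠ 1 := fun h => hq (by rw [pow_mul q 2 3, h, one_pow])
  have hone := fakeDegree_trivialCharacter hζ hq hq2 h2
  have hsign := fakeDegree_signCharacter hζ hq hq2 h2
  have hε (b : F) : fakeDegree ζ q (linearCharacter 6 (-1) b) = q ^ 3 :=
    fakeDegree_linearCharacter_neg_one (m := 3) hζ hq b
  have hρ : fakeDegree ζ q (planeCharacter 6 ζ) = q + q ^ 5 := by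
    simpa using fakeDegree_planeCharacter (k := 1) hζ hq h2 (by decide)
  have hρ' : fakeDegree ζ q (planeCharacter 6 (ζ ^ 2)) = q ^ 2 + q ^ 4 :=
    fakeDegree_planeCharacter hζ hq h2 (by decide)
  have hερ (b : F) : fakeDegree ζ q (linearCharacter 6 (-1) b * planeCharacter 6 ζ) =
      q ^ 4 + q ^ 2 := by
    simpa using fakeDegree_linearCharacter_neg_one_mul_planeCharacter (m := 3) (k := 1) hζ hq
      (by decide) b
  have hερ' (b : F) : fakeDegree ζ q (linearCharacter 6 (-1) b * planeCharacter 6 (ζ ^ 2)) =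
      q ^ 5 + q := by
    simpa using fakeDegree_linearCharacter_neg_one_mul_planeCharacter (m := 3) (k := 2) hζ hq
      (by decide) b
  have hρρ : fakeDegree ζ q (planeCharacter 6 ζ * planeCharacter 6 ζ) =
      q ^ 2 + q ^ 4 + (1 + q ^ 6) := by
    simpa using fakeDegree_planeCharacter_mul (k := 1) (l := 1) hζ hq h2 (by decide) (by decide)
  have hρρ' : fakeDegree ζ q (planeCharacter 6 ζ * planeCharacter 6 (ζ ^ 2)) =
      q ^ 3 + q ^ 3 + (q + q ^ 5) := by
    simpa using fakeDegree_planeCharacter_mul (k := 1) (l := 2) hζ hq h2 (by decide) (by decide)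
  have hρ'ρ' : fakeDegree ζ q (planeCharacter 6 (ζ ^ 2) * planeCharacter 6 (ζ ^ 2)) =
      q ^ 4 + q ^ 2 + (1 + q ^ 6) := by
    simpa using fakeDegree_planeCharacter_mul (k := 2) (l := 2) hζ hq h2 (by decide) (by decide)
  have h1 (b z : F) : linearCharacter 6 1 b * planeCharacter 6 z = planeCharacter 6 z := by
    rw [linearCharacter_mul_planeCharacter b z inv_one, one_mul]
  ext i j
  fin_cases i <;> fin_cases j <;>
    simp [irreducibleCharacter, linearCharacter_mul_linearCharacter, h1, hone, hsign, hε, hρ, hρ',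
      hερ, hερ', hρρ, hρρ', hρ'ρ', mul_comm (planeCharacter 6 _) (linearCharacter 6 _ _),
      mul_comm (planeCharacter 6 (ζ ^ 2)) (planeCharacter 6 ζ)]

theorem fakeDegree_matrix_eq_mul (hζ : IsPrimitiveRoot ζ 6) (hq0 : q ≠ 0) (hq : q ^ 6 ≠ 1) :
    Matrix.of (fun i j => q ^ (-(irreducibleIndex i + irreducibleIndex j)) *
      fakeDegree ζ q (irreducibleCharacter ζ i * irreducibleCharacter ζ j)) =
      unitriangularFactor q * diagonalFactor q * (unitriangularFactor q)ᵀ := by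
  have htable (i j : Fin 6) := congr_fun₂ (fakeDegree_irreducibleCharacter_mul hζ hq) i j
  simp only [Matrix.of_apply] at htable
  ext i j
  rw [Matrix.mul_apply, Matrix.of_apply, htable]
  simp only [diagonalFactor, Matrix.mul_diagonal, Matrix.transpose_apply, Fin.sum_univ_six]
  fin_cases i <;> fin_cases j <;>
    simp [irreducibleIndex, unitriangularFactor, zpow_neg] <;> field_simp <;> ring

theorem irreducibleCharacter_eq {K : Type*} [Field K] {ζ : K}
    (χ1 χs χε χε' χρ χρ' : DihedralGroup 6 → K)
    (hχ1 : ∀ g, χ1 g = 1)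
    (hχs_r : ∀ j : ZMod 6, χs (.r j) = 1)
    (hχs_sr : ∀ j : ZMod 6, χs (.sr j) = -1)
    (hχε_r : ∀ j : ZMod 6, χε (.r j) = (-1) ^ j.val)
    (hχε_sr : ∀ j : ZMod 6, χε (.sr j) = (-1) ^ (j.val + 1))
    (hχε'_r : ∀ j : ZMod 6, χε' (.r j) = (-1) ^ j.val)
    (hχε'_sr : ∀ j : ZMod 6, χε' (.sr j) = (-1) ^ j.val)
    (hχρ_r : ∀ j : ZMod 6, χρ (.r j) = ζ ^ j.val + ζ⁻¹ ^ j.val)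
    (hχρ_sr : ∀ j : ZMod 6, χρ (.sr j) = 0)
    (hχρ'_r : ∀ j : ZMod 6, χρ' (.r j) = (ζ ^ 2) ^ j.val + (ζ⁻¹ ^ 2) ^ j.val)
    (hχρ'_sr : ∀ j : ZMod 6, χρ' (.sr j) = 0) :
    ![χ1, χε, χρ, χρ', χε', χs] = irreducibleCharacter ζ := by
  have h1 : χ1 = linearCharacter 6 1 1 := by
    ext (j | j) <;> simp [linearCharacter, hχ1]
  have hs : χs = linearCharacter 6 1 (-1) := by
    ext (j | j) <;> simp [linearCharacter, hχs_r, hχs_sr]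
  have hε : χε = linearCharacter 6 (-1) (-1) := by
    ext (j | j) <;> simp [linearCharacter, hχε_r, hχε_sr, pow_succ]
  have hε' : χε' = linearCharacter 6 (-1) 1 := by
    ext (j | j) <;> simp [linearCharacter, hχε'_r, hχε'_sr]
  have hρ : χρ = planeCharacter 6 ζ := by
    ext (j | j) <;> simp [planeCharacter, hχρ_r, hχρ_sr]
  have hρ' : χρ' = planeCharacter 6 (ζ ^ 2) := by
    ext (j | j) <;> simp [planeCharacter, hχρ'_r, hχρ'_sr]
  rw [h1, hs, hε, hε', hρ, hρ', irreducibleCharacter]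

theorem map_irreducibleCharacter {K : Type*} [Field K] (φ : K →+* F) (ζ : K) (i : Fin 6)
    (w : DihedralGroup 6) :
    φ (irreducibleCharacter ζ i w) = irreducibleCharacter (φ ζ) i w := by
  fin_cases i <;> simp [irreducibleCharacter, map_linearCharacter, map_planeCharacter]

end OrderTwelve

theorem stmt11_general {K F : Type*} [Field K] [Field F] (φ : K →+* F) {q : F} (hq0 : q ≠ 0)
    (hq : q ^ 6 ≠ 1) {ζ : K} (hζ : IsPrimitiveRoot ζ 6)
    (χ1 χs χε χε' χρ χρ' : DihedralGroup 6 → K)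
    (hχ1 : ∀ g, χ1 g = 1)
    (hχs_r : ∀ j : ZMod 6, χs (.r j) = 1)
    (hχs_sr : ∀ j : ZMod 6, χs (.sr j) = -1)
    (hχε_r : ∀ j : ZMod 6, χε (.r j) = (-1) ^ j.val)
    (hχε_sr : ∀ j : ZMod 6, χε (.sr j) = (-1) ^ (j.val + 1))
    (hχε'_r : ∀ j : ZMod 6, χε' (.r j) = (-1) ^ j.val)
    (hχε'_sr : ∀ j : ZMod 6, χε' (.sr j) = (-1) ^ j.val)
    (hχρ_r : ∀ j : ZMod 6, χρ (.r j) = ζ ^ j.val + ζ⁻¹ ^ j.val)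
    (hχρ_sr : ∀ j : ZMod 6, χρ (.sr j) = 0)
    (hχρ'_r : ∀ j : ZMod 6, χρ' (.r j) = (ζ ^ 2) ^ j.val + (ζ⁻¹ ^ 2) ^ j.val)
    (hχρ'_sr : ∀ j : ZMod 6, χρ' (.sr j) = 0)
    (Γ : (DihedralGroup 6 → K) → F)
    (hΓ : ∀ χE : DihedralGroup 6 → K,
      Γ χE = φ (1 / 12) * ∑ w : DihedralGroup 6, (q ^ 2 - 1) * (q ^ 6 - 1) * φ (χE w) /
        (q ^ 2 - φ (χρ w) * q + φ (χs w))) :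
    let E := ![χ1, χε, χρ, χρ', χε', χs]
    Matrix.of (fun i j => q ^ (-(irreducibleIndex i + irreducibleIndex j)) * Γ (E i * E j)) =
      unitriangularFactor q * diagonalFactor q * (unitriangularFactor q)ᵀ := by
  intro E
  have hE : E = irreducibleCharacter ζ :=
    irreducibleCharacter_eq χ1 χs χε χε' χρ χρ' hχ1 hχs_r hχs_sr hχε_r hχε_sr hχε'_r hχε'_sr
      hχρ_r hχρ_sr hχρ'_r hχρ'_sr
  have hρ : χρ = planeCharacter 6 ζ := congr_fun hE 2
  have hs : χs = linearCharacter 6 1 (-1) := congr_fun hE 5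
  have hfake (χ : DihedralGroup 6 → K) : Γ χ = fakeDegree (φ ζ) q (φ ∘ χ) := by
    have h12 : (1 / 12 : K) = (2 * ((6 : ℕ) : K))⁻¹ := by norm_num
    rw [hΓ, fakeDegree_map, hρ, hs, h12]
  have hmap (i j : Fin 6) :
      φ ∘ (E i * E j) = irreducibleCharacter (φ ζ) i * irreducibleCharacter (φ ζ) j := by
    ext w
    simp only [hE, Function.comp_apply, Pi.mul_apply, map_mul, map_irreducibleCharacter]
  simp only [hfake, hmap]
  exact fakeDegree_matrix_eq_mul (hζ.map_of_injective φ.injective) hq0 hq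

/-- The factorization `M = ᵗΠ · A · Π` of the 6×6 matrix
`M_{h,h'} = q^{-h-h'} Γ_{E_h ⊗ E_{h'}}` over `ℚ(q)` (here `ℂ(q)`), where
`H = (0,1,3,4,9,12)`, `E_0 = 1, E_1 = ε, E_3 = ρ, E_4 = ρ', E_9 = ε', E_12 = s` are the
irreducible representations of the dihedral group `W` of order 12 and
`Γ_E = (1/12) Σ_{w∈W} (q²-1)(q⁶-1) tr(w,E)/det(q·Id - w)` (so that
`Γ_{E⊗E'}` is computed from the product character `χ_E χ_{E'}`).  `A` is the stated
diagonal matrix and `ᵗΠ` the stated upper triangular matrix with 1's on the diagonal. -/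
theorem stmt11 (ζ : ℂ) (hζ : IsPrimitiveRoot ζ 6)
    (χ1 χs χε χε' χρ χρ' : DihedralGroup 6 → ℂ)
    (hχ1 : ∀ g, χ1 g = 1)
    (hχs_r : ∀ j : ZMod 6, χs (DihedralGroup.r j) = 1)
    (hχs_sr : ∀ j : ZMod 6, χs (DihedralGroup.sr j) = -1)
    (hχε_r : ∀ j : ZMod 6, χε (DihedralGroup.r j) = (-1) ^ j.val)
    (hχε_sr : ∀ j : ZMod 6, χε (DihedralGroup.sr j) = (-1) ^ (j.val + 1))
    (hχε'_r : ∀ j : ZMod 6, χε' (DihedralGroup.r j) = (-1) ^ j.val)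
    (hχε'_sr : ∀ j : ZMod 6, χε' (DihedralGroup.sr j) = (-1) ^ j.val)
    (hχρ_r : ∀ j : ZMod 6, χρ (DihedralGroup.r j) = ζ ^ j.val + ζ⁻¹ ^ j.val)
    (hχρ_sr : ∀ j : ZMod 6, χρ (DihedralGroup.sr j) = 0)
    (hχρ'_r : ∀ j : ZMod 6, χρ' (DihedralGroup.r j) = (ζ ^ 2) ^ j.val + (ζ⁻¹ ^ 2) ^ j.val)
    (hχρ'_sr : ∀ j : ZMod 6, χρ' (DihedralGroup.sr j) = 0)
    (Γ : (DihedralGroup 6 → ℂ) → RatFunc ℂ)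
    (hΓ : ∀ χE : DihedralGroup 6 → ℂ,
      Γ χE = RatFunc.C (1 / 12 : ℂ) * ∑ w : DihedralGroup 6,
        (RatFunc.X ^ 2 - 1) * (RatFunc.X ^ 6 - 1) * RatFunc.C (χE w) /
          (RatFunc.X ^ 2 - RatFunc.C (χρ w) * RatFunc.X + RatFunc.C (χs w))) :
    let q : RatFunc ℂ := RatFunc.X
    let h : Fin 6 → ℤ := ![0, 1, 3, 4, 9, 12]
    let E : Fin 6 → (DihedralGroup 6 → ℂ) := ![χ1, χε, χρ, χρ', χε', χs]
    let M : Matrix (Fin 6) (Fin 6) (RatFunc ℂ) :=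
      Matrix.of fun i j => q ^ (-(h i + h j)) * Γ (fun w => E i w * E j w)
    let A : Matrix (Fin 6) (Fin 6) (RatFunc ℂ) :=
      Matrix.diagonal ![q ^ (-2 : ℤ) * (q ^ 2 - 1) * (q ^ 6 - 1),
        q ^ (-4 : ℤ) * (q ^ 2 - 1) * (q ^ 6 - 1),
        q ^ (-8 : ℤ) * (q ^ 2 - 1) * (q ^ 6 - 1),
        q ^ (-8 : ℤ) * (q ^ 6 - 1), q ^ (-18 : ℤ) * (q ^ 6 - 1), q ^ (-18 : ℤ)]
    let Pt : Matrix (Fin 6) (Fin 6) (RatFunc ℂ) :=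
      !![1, 0, q ^ 2, q ^ 2, q ^ 6, q ^ 6;
         0, 1, 0, q ^ 2, 0, q ^ 8;
         0, 0, 1, 1, q ^ 4, q ^ 4 + q ^ 8;
         0, 0, 0, 1, q ^ 4, q ^ 4 + q ^ 6;
         0, 0, 0, 0, 1, 1;
         0, 0, 0, 0, 0, 1]
    M = Pt * A * Pt.transpose := by
  have hX : (RatFunc.X : RatFunc ℂ) ^ 6 ≠ 1 := fun h =>
    RatFunc.transcendental_X (.of_pow (by decide) (h ▸ isAlgebraic_one))
  exact stmt11_general RatFunc.C RatFunc.X_ne_zero hX hζ χ1 χs χε χε' χρ χρ' hχ1 hχs_r hχs_sr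
    hχε_r hχε_sr hχε'_r hχε'_sr hχρ_r hχρ_sr hχρ'_r hχρ'_sr Γ hΓ
end
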